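/- arXiv:2203.06733 — 2 statements merged into one kernel-verified Lean document; each statement's English description precedes it below -/
import Mathlib

section
/- Let g_0, g_1, …, g_N be tempered distributions on ℝ^d such that for every C^∞ function φ with compact support and every n = 0, …, N, the function t = (t_1,…,t_d) ↦ g_n(φ(t − ·)) is almost periodic in t_1 ∈ ℝ for every fixed (t_2,…,t_d) ∈ ℝ^{d−1}. If the tempered distribution F = Σ_{n=0}^N y_1^n g_n (where y_1^n g_n denotes the tempered distribution φ ↦ g_n(y_1^n φ)) has support of bounded density, then the union ∪_{n=0}^N supp g_n has bounded density. -/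
open MeasureTheory SchwartzMap Metric Set
open scoped Pointwise RealInnerProductSpace ENNReal NNReal

noncomputable section

/-- Euclidean space `ℝ^d`. -/
abbrev Rd (d : ℕ) : Type := EuclideanSpace ℝ (Fin d)

/-- The space `S*(ℝ^d)` of tempered distributions: continuous linear functionals
on the Schwartz space `S(ℝ^d)`. -/
abbrev TemperedDist (d : ℕ) : Type := SchwartzMap (Rd d) ℂ →L[ℂ] ℂ

/-- The Fourier transform of a tempered distribution: `f̂(φ) = f(φ̂)`. -/
def fourierTD {d : ℕ} (f : TemperedDist d) : TemperedDist d :=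
  f.comp (fourierTransformCLM ℂ)

/-- The support of a tempered distribution: `x ∈ supp f` iff for every open
neighbourhood `U` of `x` there is a smooth compactly supported test function
supported in `U` on which `f` does not vanish. -/
def tdSupport {d : ℕ} (f : TemperedDist d) : Set (Rd d) :=
  {x | ∀ U : Set (Rd d), IsOpen U → x ∈ U →
    ∃ φ : SchwartzMap (Rd d) ℂ, HasCompactSupport (⇑φ) ∧ tsupport (⇑φ) ⊆ U ∧ f φ ≠ 0}

/-- A set is locally finite if its intersection with every ball is finite. -/
def LocFinite {d : ℕ} (A : Set (Rd d)) : Prop :=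
  ∀ (x : Rd d) (r : ℝ), (A ∩ Metric.ball x r).Finite

/-- A set is uniformly discrete if distances between distinct points are
bounded below by a positive constant. -/
def UniformlyDiscrete {d : ℕ} (A : Set (Rd d)) : Prop :=
  ∃ η > (0:ℝ), ∀ x ∈ A, ∀ y ∈ A, x ≠ y → η ≤ dist x y

/-- A set is polynomially discrete (p-discrete) if
`|x - x'| ≥ c min{1, |x|^{-h}}` for distinct points `x, x'` of the set. -/
def PDiscrete {d : ℕ} (A : Set (Rd d)) : Prop :=
  ∃ c > (0:ℝ), ∃ h > (0:ℝ), ∀ x ∈ A, ∀ y ∈ A, x ≠ y →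
    c * (if ‖x‖ ≤ 1 then 1 else ‖x‖ ^ (-h)) ≤ dist x y

/-- A set has bounded density if it is locally finite and the number of its
points in balls of radius 1 is uniformly bounded. -/
def BoundedDensity {d : ℕ} (A : Set (Rd d)) : Prop :=
  LocFinite A ∧ ∃ N : ℕ, ∀ x : Rd d, (A ∩ Metric.ball x 1).ncard ≤ N

/-- A set is relatively dense if it intersects every ball of some fixed radius `R`. -/
def RelDense {d : ℕ} (A : Set (Rd d)) : Prop :=
  ∃ R : ℝ, 0 < R ∧ ∀ x : Rd d, ∃ a ∈ A, dist x a ≤ R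

/-- A full-rank lattice in `ℝ^d` is the image of `ℤ^d` under an invertible
linear operator. -/
def IsFullRankLattice {d : ℕ} (L : Set (Rd d)) : Prop :=
  ∃ T : Rd d →ₗ[ℝ] Rd d, Function.Bijective T ∧
    L = T '' {x : Rd d | ∀ i, ∃ n : ℤ, x i = (n : ℝ)}

/-- The multi-indices `k ∈ (ℕ ∪ {0})^d` with `‖k‖ = k₁ + ⋯ + k_d ≤ K`. -/
def mIdx (d K : ℕ) : Finset (Fin d → ℕ) :=
  (Finset.Iic fun _ => K).filter fun k => (∑ i, k i) ≤ K

/-- Partial derivative in the `i`-th coordinate direction. -/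
def pderiv' {d : ℕ} (i : Fin d) (φ : Rd d → ℂ) : Rd d → ℂ :=
  fun x => fderiv ℝ φ x (EuclideanSpace.single i (1:ℝ))

/-- The mixed partial derivative `D^k = ∂^{k₁}_{x₁} ⋯ ∂^{k_d}_{x_d}`. -/
def Dmulti {d : ℕ} (k : Fin d → ℕ) : (Rd d → ℂ) → (Rd d → ℂ) :=
  ((List.finRange d).map fun i => (pderiv' i)^[k i]).foldr (· ∘ ·) id

/-- The action of `D^k δ_λ` on a test function: `φ ↦ (-1)^{‖k‖} (D^k φ)(λ)`. -/
def dkDelta {d : ℕ} (k : Fin d → ℕ) (lam : Rd d) (φ : SchwartzMap (Rd d) ℂ) : ℂ :=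
  (-1 : ℂ) ^ (∑ i, k i) * Dmulti k (⇑φ) lam

/-- The exponential `e^{2πi⟨x,w⟩}`. -/
def e2pi {d : ℕ} (x w : Rd d) : ℂ :=
  Complex.exp (((2 * Real.pi : ℝ) : ℂ) * Complex.I * ((⟪x, w⟫ : ℝ) : ℂ))

/-- A trigonometric polynomial: a finite sum `Σ c_ω e^{2πi⟨x,ω⟩}`. -/
def IsTrigPoly {d : ℕ} (P : Rd d → ℂ) : Prop :=
  ∃ (n : ℕ) (cc : Fin n → ℂ) (w : Fin n → Rd d),
    ∀ x, P x = ∑ i, cc i * e2pi x (w i)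

/-- The monomial `x^m = x₁^{m₁} ⋯ x_d^{m_d}` (as a complex number). -/
def monom {d : ℕ} (m : Fin d → ℕ) (x : Rd d) : ℂ := ((∏ i, (x i) ^ (m i) : ℝ) : ℂ)

/-- The total variation of the pure point measure with masses `b` on the open
ball `B(0,r)`: `Σ_{|γ| < r} |b(γ)|` (as an extended nonnegative real). -/
def ballVar {d : ℕ} (b : Rd d → ℂ) (r : ℝ) : ℝ≥0∞ :=
  ∑' γ : Rd d, if ‖γ‖ < r then (‖b γ‖₊ : ℝ≥0∞) else 0

/-- The pure point measure `μ = Σ_λ a(λ) δ_λ` belongs to `S*(ℝ^d)` and is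
represented there by the tempered distribution `f`: its support is countable,
`Σ_λ |a(λ)| |φ(λ)| < ∞` for every Schwartz function `φ`, and the (automatically
continuous) functional `φ ↦ Σ_λ a(λ) φ(λ)` coincides with `f`. -/
def RepMeasure {d : ℕ} (a : Rd d → ℂ) (f : TemperedDist d) : Prop :=
  {x | a x ≠ 0}.Countable ∧
  (∀ φ : SchwartzMap (Rd d) ℂ, Summable fun lam => ‖a lam‖ * ‖φ lam‖) ∧
  (∀ φ : SchwartzMap (Rd d) ℂ, f φ = ∑' lam, a lam * φ lam)

/-- A continuous function on `ℝ^d` is almost periodic if for every `ε > 0` its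
set of `ε`-almost periods is relatively dense. -/
def APFunction {d : ℕ} (g : Rd d → ℂ) : Prop :=
  Continuous g ∧ ∀ ε > (0:ℝ), RelDense {τ : Rd d | ∀ t, ‖g (t + τ) - g t‖ < ε}

/-- A tempered distribution is almost periodic if for every smooth compactly
supported `ψ` the function `t ↦ f(ψ(t - ·))` is almost periodic. -/
def APDistribution {d : ℕ} (f : TemperedDist d) : Prop :=
  ∀ ψ : Rd d → ℂ, ContDiff ℝ (⊤ : ℕ∞) ψ → HasCompactSupport ψ →
    ∀ Φ : Rd d → SchwartzMap (Rd d) ℂ, (∀ t y, Φ t y = ψ (t - y)) →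
      APFunction fun t => f (Φ t)
/-- Relative density of a set in `ℝ`. -/
def RelDenseR (A : Set ℝ) : Prop :=
  ∃ R : ℝ, 0 < R ∧ ∀ s : ℝ, ∃ a ∈ A, dist s a ≤ R

/-- A continuous function on `ℝ` is almost periodic if for every `ε > 0` its
set of `ε`-almost periods is relatively dense. -/
def APFunctionR (g : ℝ → ℂ) : Prop :=
  Continuous g ∧ ∀ ε > (0:ℝ), RelDenseR {τ : ℝ | ∀ t, ‖g (t + τ) - g t‖ < ε}


lemma aux_ap_uc (f : ℝ → ℂ) (hf : APFunctionR f) : UniformContinuous f := by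
  obtain ⟨hc, hp⟩ := hf
  rw [Metric.uniformContinuous_iff]
  intro ε hε
  obtain ⟨R, hR, hp⟩ := hp (ε/3) (by positivity)
  have hK : UniformContinuousOn f (Set.Icc (-R-1) (R+1)) :=
    isCompact_Icc.uniformContinuousOn_of_continuous hc.continuousOn
  rw [Metric.uniformContinuousOn_iff] at hK
  obtain ⟨δ, hδ, hK⟩ := hK (ε/3) (by positivity)
  refine ⟨min δ 1, by positivity, ?_⟩
  intro a b hab
  obtain ⟨p, hpp, hpd⟩ := hp (-a)
  have h1 := hpp a
  have h2 := hpp b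
  rw [Real.dist_eq] at hpd hab
  have hab1 := lt_of_lt_of_le hab (min_le_left _ _)
  have hab2 := lt_of_lt_of_le hab (min_le_right _ _)
  rw [abs_le] at hpd
  have hab2' := abs_lt.1 hab2
  have h3 := hK (a+p) (by constructor <;> linarith) (b+p) (by constructor <;> linarith)
    (by rw [Real.dist_eq]; simpa using hab1)
  rw [← dist_eq_norm] at h1 h2
  calc dist (f a) (f b) ≤ dist (f a) (f (a+p)) + dist (f (a+p)) (f (b+p)) + dist (f (b+p)) (f b) :=
        dist_triangle4 _ _ _ _
    _ < ε := by rw [dist_comm (f a)]; linarith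

lemma aux_color (f : ℝ → ℂ) (hf : APFunctionR f) (ε : ℝ) (hε : 0 < ε) :
    ∃ (n : ℕ) (c : ℝ → Fin n), ∀ τ τ', c τ = c τ' → ∀ t, dist (f (t + τ)) (f (t + τ')) < ε := by
  have huc := aux_ap_uc f hf
  obtain ⟨hc, hp⟩ := hf
  obtain ⟨R, hR, hp⟩ := hp (ε/3) (by positivity)
  rw [Metric.uniformContinuous_iff] at huc
  obtain ⟨δ, hδ, huc⟩ := huc (ε/3) (by positivity)
  choose p hpp hpd using hp
  have hmem : ∀ τ, ⌊(τ - p τ)/δ⌋ ∈ Finset.Icc ⌊-R/δ⌋ ⌊R/δ⌋ := by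
    intro τ
    have := hpd τ
    rw [Real.dist_eq, abs_le] at this
    rw [Finset.mem_Icc]
    constructor <;> apply Int.floor_le_floor <;> gcongr <;> linarith
  let e := Fintype.equivFin (Finset.Icc ⌊-R/δ⌋ ⌊R/δ⌋)
  refine ⟨_, fun τ => e ⟨_, hmem τ⟩, ?_⟩
  intro τ τ' h t
  have h := congrArg Subtype.val (e.injective h)
  simp only at h
  have h4 := Int.abs_sub_lt_one_of_floor_eq_floor h
  rw [← sub_div, abs_div, abs_of_pos hδ, div_lt_one hδ] at h4
  have h1 := hpp τ (t + τ - p τ)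
  have h2 := hpp τ' (t + τ' - p τ')
  simp only [sub_add_cancel] at h1 h2
  have h3 := @huc (t + τ - p τ) (t + τ' - p τ') (by
    rw [Real.dist_eq, show t + τ - p τ - (t + τ' - p τ') = τ - p τ - (τ' - p τ') by ring]
    exact h4)
  rw [← dist_eq_norm] at h1 h2
  calc dist (f (t+τ)) (f (t+τ')) ≤ dist (f (t+τ)) (f (t+τ-p τ)) +
        dist (f (t+τ-p τ)) (f (t+τ'-p τ')) + dist (f (t+τ'-p τ')) (f (t+τ')) :=
        dist_triangle4 _ _ _ _
    _ < ε := by rw [dist_comm (f (t+τ'-p τ'))]; linarith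

lemma aux_common {ι : Type*} [Finite ι] (f : ι → ℝ → ℂ) (hf : ∀ i, APFunctionR (f i))
    (ε : ℝ) (hε : 0 < ε) (L : ℝ) (hL : 0 < L) :
    ∃ σ, L ≤ σ ∧ ∀ i t, dist (f i (t + σ)) (f i t) < ε := by
  choose n c hc using fun i => aux_color (f i) (hf i) ε hε
  have key : ∀ a b : ℕ, a < b → (fun i => c i (a * L)) = (fun i => c i (b * L)) →
      ∃ σ, L ≤ σ ∧ ∀ i t, dist (f i (t + σ)) (f i t) < ε := by
    intro a b hab h
    refine ⟨b * L - a * L, ?_, ?_⟩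
    · have : (a:ℝ) + 1 ≤ b := by exact_mod_cast hab
      nlinarith
    · intro i t
      have := hc i _ _ (congrFun h i).symm (t - a * L)
      convert this using 3 <;> ring
  obtain ⟨a, b, hab, h⟩ := Finite.exists_ne_map_eq_of_infinite
    (fun m : ℕ => fun i => c i (m * L))
  rcases lt_or_gt_of_ne hab with h' | h'
  · exact key a b h' h
  · exact key b a h' h.symm

lemma aux_seq {ι : Type*} [Finite ι] (f : ι → ℝ → ℂ) (hf : ∀ i, APFunctionR (f i)) :
    ∃ σ : ℕ → ℝ, Filter.Tendsto σ Filter.atTop Filter.atTop ∧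
      ∀ i t, Filter.Tendsto (fun m => f i (t + σ m)) Filter.atTop (nhds (f i t)) := by
  choose σ h1 h2 using fun m : ℕ => aux_common f hf (1/((m:ℝ)+1)) (by positivity) ((m:ℝ)+1)
    (by positivity)
  refine ⟨σ, ?_, ?_⟩
  · refine Filter.tendsto_atTop_mono (fun m => (h1 m)) ?_
    exact Filter.tendsto_atTop_add_const_right _ _ tendsto_natCast_atTop_atTop
  · intro i t
    rw [tendsto_iff_dist_tendsto_zero]
    exact squeeze_zero (fun _ => dist_nonneg) (fun m => (h2 m i t).le)
      tendsto_one_div_add_atTop_nhds_zero_nat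

/-- functions recurrent along a sequence -/
def auxAlg (σ : ℕ → ℝ) : Subalgebra ℂ (ℝ → ℂ) where
  carrier := {f | ∀ t, Filter.Tendsto (fun m => f (t + σ m)) Filter.atTop (nhds (f t))}
  mul_mem' := fun ha hb t => (ha t).mul (hb t)
  add_mem' := fun ha hb t => (ha t).add (hb t)
  algebraMap_mem' := fun r t => by
    simp

/-- evaluation at a point -/
def auxEv (σ : ℕ → ℝ) (t : ℝ) : auxAlg σ →+* ℂ :=
  (Pi.evalRingHom (fun _ : ℝ => ℂ) t).comp (auxAlg σ).val.toRingHom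

lemma auxEv_apply (σ : ℕ → ℝ) (t : ℝ) (f : auxAlg σ) : auxEv σ t f = f.1 t := rfl

lemma aux_poly_zero (σ : ℕ → ℝ) (hσ : Filter.Tendsto σ Filter.atTop Filter.atTop)
    (P : Polynomial (auxAlg σ)) (hP : ∀ t : ℝ, (P.map (auxEv σ t)).eval (t : ℂ) = 0) : P = 0 := by
  rw [← Polynomial.leadingCoeff_eq_zero]
  apply Subtype.ext
  funext t
  show P.leadingCoeff.1 t = 0
  have hs : Filter.Tendsto (fun m => t + σ m) Filter.atTop Filter.atTop :=
    Filter.tendsto_atTop_add_const_left _ _ hσ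
  have hsi : Filter.Tendsto (fun m => (((t + σ m)⁻¹ : ℝ) : ℂ)) Filter.atTop (nhds 0) := by
    have := (Complex.continuous_ofReal.tendsto 0).comp (tendsto_inv_atTop_zero.comp hs)
    simpa [Function.comp_def] using this
  have key : ∀ᶠ m in Filter.atTop, ∑ i ∈ Finset.range (P.natDegree + 1),
      (P.coeff i).1 (t + σ m) * (((t + σ m)⁻¹ : ℝ) : ℂ) ^ (P.natDegree - i) = 0 := by
    filter_upwards [hs.eventually_gt_atTop 0] with m hm
    have h := hP (t + σ m)
    rw [Polynomial.eval_map, Polynomial.eval₂_eq_sum_range] at h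
    have hne : ((t + σ m : ℝ) : ℂ) ≠ 0 := by exact_mod_cast hm.ne'
    have h2 := congrArg (· * ((((t + σ m : ℝ) : ℂ)⁻¹) ^ P.natDegree)) h
    simp only [zero_mul, Finset.sum_mul] at h2
    rw [← h2]
    refine Finset.sum_congr rfl fun i hi => ?_
    have hi' : i ≤ P.natDegree := by simpa [Nat.lt_succ_iff] using hi
    rw [auxEv_apply, mul_assoc]
    congr 1
    rw [Complex.ofReal_inv]
    generalize ((t + σ m : ℝ) : ℂ) = z at *
    obtain ⟨k, hk⟩ := Nat.exists_eq_add_of_le hi'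
    rw [hk, Nat.add_sub_cancel_left, pow_add, ← mul_assoc, ← mul_pow, mul_inv_cancel₀ hne,
      one_pow, one_mul]
  have hlim : Filter.Tendsto (fun m => ∑ i ∈ Finset.range (P.natDegree + 1),
      (P.coeff i).1 (t + σ m) * (((t + σ m)⁻¹ : ℝ) : ℂ) ^ (P.natDegree - i)) Filter.atTop
      (nhds (∑ i ∈ Finset.range (P.natDegree + 1),
        (P.coeff i).1 t * (0:ℂ) ^ (P.natDegree - i))) :=
    tendsto_finsetSum _ fun i _ => ((P.coeff i).2 t).mul (hsi.pow _)
  have h0 := tendsto_nhds_unique hlim ((Filter.tendsto_congr' key).2 tendsto_const_nhds)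
  rw [Finset.sum_range_succ, Finset.sum_eq_zero] at h0
  · simpa using h0
  · intro i hi
    have : P.natDegree - i ≠ 0 := by
      have := Finset.mem_range.1 hi
      omega
    simp [this]

lemma aux_support {d : ℕ} (F : TemperedDist d) (φ : SchwartzMap (Rd d) ℂ)
    (hc : HasCompactSupport (⇑φ)) (hd : Disjoint (tsupport (⇑φ)) (tdSupport F)) : F φ = 0 := by
  have h1 : ∀ x : tsupport (⇑φ), ∃ U : Set (Rd d), IsOpen U ∧ x.1 ∈ U ∧
      ∀ ψ : SchwartzMap (Rd d) ℂ, HasCompactSupport (⇑ψ) → tsupport (⇑ψ) ⊆ U → F ψ = 0 := by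
    intro x
    have := Set.disjoint_left.1 hd x.2
    simp only [tdSupport, Set.mem_ofPred_eq] at this
    push Not at this
    exact this
  choose U hUo hUx hU using h1
  obtain ⟨T, hT⟩ := hc.isCompact.elim_finite_subcover U hUo
    (fun x hx => Set.mem_iUnion.2 ⟨⟨x, hx⟩, hUx ⟨x, hx⟩⟩)
  obtain ⟨ρ, hρ⟩ := SmoothPartitionOfUnity.exists_isSubordinate (modelWithCornersSelf ℝ (Rd d))
    (isClosed_tsupport (⇑φ)) (fun i : T => U i.1) (fun i => hUo _) (by
      rw [Set.iUnion_subtype]; exact hT)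
  have hcs : ∀ i : T, HasCompactSupport (fun y => ((ρ i y : ℝ) : ℂ) * φ y) :=
    fun i => hc.mul_left
  have hsm : ∀ i : T, ContDiff ℝ (⊤ : ℕ∞) (fun y => ((ρ i y : ℝ) : ℂ) * φ y) := by
    intro i
    have : ContDiff ℝ (⊤ : ℕ∞) (ρ i) := (ρ i).contMDiff.contDiff
    exact (Complex.ofRealCLM.contDiff.comp this).mul (φ.smooth _)
  have hsum : φ = ∑ i, (hcs i).toSchwartzMap (hsm i) := by
    ext y
    rw [_root_.sum_apply]
    show φ y = ∑ i, ((ρ i y : ℝ) : ℂ) * φ y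
    rw [← Finset.sum_mul]
    by_cases hy : y ∈ tsupport (⇑φ)
    · have := ρ.sum_eq_one hy
      rw [finsum_eq_sum_of_fintype] at this
      rw [← Complex.ofReal_sum, this]; simp
    · rw [image_eq_zero_of_notMem_tsupport hy]; simp
  rw [hsum, map_sum]
  refine Finset.sum_eq_zero fun i _ => hU i.1 _ (hcs i) ?_
  refine subset_trans ?_ (hρ i)
  show tsupport (fun y => ((ρ i y : ℝ) : ℂ) * φ y) ⊆ _
  refine (tsupport_mul_subset_left).trans ?_
  apply closure_mono
  intro y hy
  simpa using hy

lemma aux_single {d : ℕ} (hd : 0 < d) (N : ℕ)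
    (g : Fin (N + 1) → TemperedDist d) (F : TemperedDist d)
    (hap : ∀ (n : Fin (N + 1)) (ψ : Rd d → ℂ), ContDiff ℝ (⊤ : ℕ∞) ψ →
      HasCompactSupport ψ →
      ∀ Φ : Rd d → SchwartzMap (Rd d) ℂ, (∀ t y, Φ t y = ψ (t - y)) →
      ∀ t : Rd d, APFunctionR fun s => g n (Φ (WithLp.toLp 2 (Function.update t ⟨0, hd⟩ s))))
    (hsum : ∀ (φ : SchwartzMap (Rd d) ℂ) (Ψ : Fin (N + 1) → SchwartzMap (Rd d) ℂ),
      (∀ (n : Fin (N + 1)) (y : Rd d),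
        Ψ n y = (((y ⟨0, hd⟩ : ℝ) ^ (n : ℕ) : ℝ) : ℂ) * φ y) →
      F φ = ∑ n, g n (Ψ n))
    (φ : SchwartzMap (Rd d) ℂ) (hc : HasCompactSupport (⇑φ)) :
    ∃ a : Fin (N + 1) → Fin (N + 1) → ℝ → ℂ, (∀ n k, APFunctionR (a n k)) ∧
      (∀ s, F (φ.compSubConstCLM ℂ (EuclideanSpace.single ⟨0, hd⟩ s)) =
        ∑ n : Fin (N + 1), ∑ k : Fin (N + 1), (Nat.choose n k : ℂ) * a n k s * (s : ℂ) ^ (k : ℕ)) ∧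
      (∀ n, a n n 0 = g n φ) ∧
      (∀ n k, (∀ ψ : SchwartzMap (Rd d) ℂ, HasCompactSupport (⇑ψ) →
        tsupport (⇑ψ) ⊆ tsupport (⇑φ) → g n ψ = 0) → a n k 0 = 0) := by
  have hcs : ∀ k : ℕ, HasCompactSupport (fun y : Rd d => (((y ⟨0, hd⟩ : ℝ) : ℂ)) ^ k * φ y) :=
    fun k => hc.mul_left
  have hsm : ∀ k : ℕ, ContDiff ℝ (⊤ : ℕ∞)
      (fun y : Rd d => (((y ⟨0, hd⟩ : ℝ) : ℂ)) ^ k * φ y) := by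
    intro k
    have h1 : ContDiff ℝ (⊤ : ℕ∞) (fun y : Rd d => y ⟨0, hd⟩) := by fun_prop
    exact ((Complex.ofRealCLM.contDiff.comp h1).pow k).mul (φ.smooth _)
  let S : ℕ → SchwartzMap (Rd d) ℂ := fun k => (hcs k).toSchwartzMap (hsm k)
  have hS : ∀ k y, S k y = (((y ⟨0, hd⟩ : ℝ) : ℂ)) ^ k * φ y := fun k y => rfl
  have hSc : ∀ k, HasCompactSupport (S k) := hcs
  have hS0 : S 0 = φ := by ext y; rw [hS]; simp
  let T : ℕ → ℝ → SchwartzMap (Rd d) ℂ := fun k s =>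
    (S k).compSubConstCLM ℂ (EuclideanSpace.single ⟨0, hd⟩ s)
  have hT0 : ∀ k, T k 0 = S k := by
    intro k; ext y
    have h0 : (EuclideanSpace.single ⟨0, hd⟩ (0:ℝ) : Rd d) = 0 := by ext i; simp
    simp [T, h0]
  refine ⟨fun n k s => g n (T (n - k) s), ?_, ?_, ?_, ?_⟩
  · intro n k
    have h := hap n (fun y => S (n - k) (-y)) (((S _).smooth _).comp contDiff_neg)
      ((hSc _).comp_homeomorph (Homeomorph.neg (Rd d)))
      (fun t => (S (n - k)).compSubConstCLM ℂ t) (fun t y => by simp) 0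
    convert h using 6 with s
    ext i
    simp [Function.update_apply, PiLp.single_apply]
  · intro s
    rw [hsum _ (fun n => ∑ k : Fin (N + 1), ((Nat.choose n k : ℂ) * (s : ℂ) ^ (k : ℕ)) • T (n - k) s)]
    · refine Finset.sum_congr rfl fun n _ => ?_
      rw [map_sum]
      refine Finset.sum_congr rfl fun k _ => ?_
      rw [map_smul, smul_eq_mul]
      ring
    · intro n y
      rw [_root_.sum_apply]
      have e1 : ∀ k : Fin (N + 1), (((Nat.choose n k : ℂ) * (s : ℂ) ^ (k : ℕ)) • T (n - k) s) y
          = (s : ℂ) ^ (k : ℕ) * ((y ⟨0, hd⟩ - s : ℝ) : ℂ) ^ ((n : ℕ) - k) * (Nat.choose n k : ℂ)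
            * φ (y - EuclideanSpace.single ⟨0, hd⟩ s) := by
        intro k
        rw [_root_.smul_apply]
        simp only [T, SchwartzMap.compSubConstCLM_apply, hS, smul_eq_mul]
        simp
        ring
      simp_rw [e1]
      rw [← Finset.sum_mul, SchwartzMap.compSubConstCLM_apply]
      congr 1
      rw [Fin.sum_univ_eq_sum_range (fun k => (s : ℂ) ^ (k : ℕ) *
        ((y ⟨0, hd⟩ - s : ℝ) : ℂ) ^ ((n : ℕ) - k) * (Nat.choose n k : ℂ)) (N + 1)]
      have hsub : Finset.range ((n : ℕ) + 1) ⊆ Finset.range (N + 1) := by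
        intro k hk
        have := n.2
        simp only [Finset.mem_range] at *
        omega
      rw [← Finset.sum_subset hsub, ← add_pow]
      · push_cast; ring
      · intro k _ hk
        rw [Nat.choose_eq_zero_of_lt (by simpa using hk)]
        simp
  · intro n
    simp [hT0, hS0]
  · intro n k h
    simp only [hT0]
    apply h _ (hSc _)
    exact tsupport_mul_subset_right

lemma aux_count {d : ℕ} (hd : 0 < d) (N : ℕ)
    (g : Fin (N + 1) → TemperedDist d) (F : TemperedDist d)
    (hap : ∀ (n : Fin (N + 1)) (ψ : Rd d → ℂ), ContDiff ℝ (⊤ : ℕ∞) ψ →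
      HasCompactSupport ψ →
      ∀ Φ : Rd d → SchwartzMap (Rd d) ℂ, (∀ t y, Φ t y = ψ (t - y)) →
      ∀ t : Rd d, APFunctionR fun s => g n (Φ (WithLp.toLp 2 (Function.update t ⟨0, hd⟩ s))))
    (hsum : ∀ (φ : SchwartzMap (Rd d) ℂ) (Ψ : Fin (N + 1) → SchwartzMap (Rd d) ℂ),
      (∀ (n : Fin (N + 1)) (y : Rd d),
        Ψ n y = (((y ⟨0, hd⟩ : ℝ) ^ (n : ℕ) : ℝ) : ℂ) * φ y) →
      F φ = ∑ n, g n (Ψ n))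
    (K : ℕ) (hK : ∀ x : Rd d, (tdSupport F ∩ Metric.ball x 1).ncard ≤ K)
    (hfin : LocFinite (tdSupport F)) (x : Rd d) (J : Finset (Rd d))
    (hJ : (J : Set (Rd d)) ⊆ (⋃ n, tdSupport (g n)) ∩ Metric.ball x 1) : J.card ≤ K := by
  by_contra! hcard
  obtain ⟨U, hU, hdisj⟩ := J.finite_toSet.t2_separation
  have h1 : ∀ j : J, ∃ (φ : SchwartzMap (Rd d) ℂ) (m : Fin (N + 1)), HasCompactSupport (⇑φ) ∧
      tsupport (⇑φ) ⊆ U j ∩ Metric.ball x 1 ∧ g m φ ≠ 0 ∧ ∀ n, m < n →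
      ∀ ψ : SchwartzMap (Rd d) ℂ, HasCompactSupport (⇑ψ) → tsupport (⇑ψ) ⊆ tsupport (⇑φ) →
        g n ψ = 0 := by
    classical
    intro j
    obtain ⟨hj1, hj2⟩ := hJ j.2
    obtain ⟨n0, hn0⟩ := Set.mem_iUnion.1 hj1
    let A : Finset (Fin (N + 1)) := Finset.univ.filter fun n =>
      ∃ φ : SchwartzMap (Rd d) ℂ, HasCompactSupport (⇑φ) ∧
        tsupport (⇑φ) ⊆ U j ∩ Metric.ball x 1 ∧ g n φ ≠ 0
    have hA : A.Nonempty := ⟨n0, by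
      simp only [A, Finset.mem_filter, Finset.mem_univ, true_and]
      exact hn0 _ ((hU j).2.inter Metric.isOpen_ball) ⟨(hU j).1, hj2⟩⟩
    obtain ⟨m, hm, hmax⟩ : ∃ m ∈ A, ∀ n ∈ A, n ≤ m :=
      ⟨A.max' hA, A.max'_mem hA, fun n hn => A.le_max' n hn⟩
    simp only [A, Finset.mem_filter, Finset.mem_univ, true_and] at hm hmax
    obtain ⟨φ, hc, hs, hg⟩ := hm
    refine ⟨φ, m, hc, hs, hg, ?_⟩
    intro n hn ψ hψ hψs
    by_contra hne
    exact absurd (hmax n ⟨ψ, hψ, hψs.trans hs, hne⟩) (not_le.2 hn)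
  choose φ m hc hs hg hhi using h1
  choose a haAP haF ha0 hahi using fun j => aux_single hd N g F hap hsum (φ j) (hc j)
  obtain ⟨σ, hσ, hσa⟩ := aux_seq (fun i : J × Fin (N + 1) × Fin (N + 1) => a i.1 i.2.1 i.2.2)
    (fun i => haAP _ _ _)
  let b : J → Fin (N + 1) → Fin (N + 1) → auxAlg σ := fun j n k =>
    ⟨a j n k, fun t => hσa (j, n, k) t⟩
  let P : J → Polynomial (auxAlg σ) := fun j =>
    ∑ n : Fin (N + 1), ∑ k : Fin (N + 1), Polynomial.monomial (k : ℕ) ((Nat.choose n k : auxAlg σ) * b j n k)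
  have hPev : ∀ j (t : ℝ), ((P j).map (auxEv σ t)).eval (t : ℂ) =
      F ((φ j).compSubConstCLM ℂ (EuclideanSpace.single ⟨0, hd⟩ t)) := by
    intro j t
    rw [haF]
    simp only [P, Polynomial.map_sum, Polynomial.eval_finsetSum, Polynomial.map_monomial,
      Polynomial.eval_monomial, map_mul, map_natCast, auxEv_apply, b]
  have hprod : ∏ j, P j = 0 := by
    apply aux_poly_zero σ hσ
    intro t
    rw [Polynomial.map_prod, Polynomial.eval_prod]
    suffices h : ∃ j, ((P j).map (auxEv σ t)).eval (t : ℂ) = 0 by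
      obtain ⟨j, hj⟩ := h
      exact Finset.prod_eq_zero (Finset.mem_univ j) hj
    by_contra! hcon
    set e : Rd d := EuclideanSpace.single ⟨0, hd⟩ t with he
    have h2 : ∀ j : J, ∃ y ∈ tdSupport F, y - e ∈ U j ∩ Metric.ball x 1 := by
      intro j
      have h3 := hcon j
      rw [hPev] at h3
      have hcomp : (⇑((φ j).compSubConstCLM ℂ e)) = ⇑(φ j) ∘ (Homeomorph.subRight e) := by
        ext y; simp
      have hcc : HasCompactSupport (⇑((φ j).compSubConstCLM ℂ e)) := by
        rw [hcomp]; exact (hc j).comp_homeomorph _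
      have h4 := mt (aux_support F _ hcc) h3
      obtain ⟨y, hy1, hy2⟩ := Set.not_disjoint_iff.1 h4
      refine ⟨y, hy2, hs j ?_⟩
      rw [hcomp, tsupport_comp_eq_preimage] at hy1
      simpa using hy1
    choose y hyF hyU using h2
    have hinj : Function.Injective y := by
      intro i j hij
      by_contra hne
      have := hdisj i.2 j.2 (fun h => hne (Subtype.ext h))
      exact Set.disjoint_left.1 this (hyU i).1 (hij ▸ (hyU j).1)
    have hsub : Set.range y ⊆ tdSupport F ∩ Metric.ball (x + e) 1 := by
      rintro _ ⟨j, rfl⟩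
      refine ⟨hyF j, ?_⟩
      have := (hyU j).2
      rw [Metric.mem_ball, dist_eq_norm] at this ⊢
      rwa [show y j - (x + e) = y j - e - x by abel]
    have h5 := Set.ncard_le_ncard hsub (hfin _ _)
    rw [← Set.image_univ, Set.ncard_image_of_injective _ hinj, Set.ncard_univ,
      Nat.card_eq_fintype_card, Fintype.card_coe] at h5
    exact absurd (h5.trans (hK _)) (not_le.2 hcard)
  have h6 : ∏ j, (P j).map (auxEv σ 0) = 0 := by
    rw [← Polynomial.map_prod, hprod, Polynomial.map_zero]
  obtain ⟨j, -, hj⟩ := Finset.prod_eq_zero_iff.1 h6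
  have h7 := congrArg (fun p => p.coeff (m j : ℕ)) hj
  simp only [P, Polynomial.map_sum, Polynomial.map_monomial, Polynomial.finsetSum_coeff,
    Polynomial.coeff_monomial, map_mul, map_natCast, auxEv_apply, b, Polynomial.coeff_zero,
    Fin.val_inj, Finset.sum_ite_eq', Finset.mem_univ, if_true] at h7
  rw [Finset.sum_eq_single (m j)] at h7
  · simp only [Nat.choose_self, Nat.cast_one, one_mul, ha0] at h7
    exact hg j h7
  · intro n _ hn
    rcases lt_or_gt_of_ne hn with h | h
    · rw [Nat.choose_eq_zero_of_lt (by exact_mod_cast h)]; simp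
    · rw [hahi j n (m j) (hhi j n h), mul_zero]
  · simp

/-- (The Lemma.) Let `g_0, …, g_N` be tempered distributions
on `ℝ^d` such that for every smooth compactly supported `φ` the functions
`t ↦ g_n(φ(t - ·))` are almost periodic in `t₁` for every fixed
`(t₂, …, t_d)`. If `F = Σ_{n=0}^N y₁^n g_n` has support of bounded density,
then `⋃_n supp g_n` has bounded density. -/
theorem statement13 {d : ℕ} (hd : 0 < d) (N : ℕ)
    (g : Fin (N + 1) → TemperedDist d) (F : TemperedDist d)
    (hap : ∀ (n : Fin (N + 1)) (ψ : Rd d → ℂ), ContDiff ℝ (⊤ : ℕ∞) ψ →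
      HasCompactSupport ψ →
      ∀ Φ : Rd d → SchwartzMap (Rd d) ℂ, (∀ t y, Φ t y = ψ (t - y)) →
      ∀ t : Rd d, APFunctionR fun s => g n (Φ (WithLp.toLp 2 (Function.update t ⟨0, hd⟩ s))))
    (hsum : ∀ (φ : SchwartzMap (Rd d) ℂ) (Ψ : Fin (N + 1) → SchwartzMap (Rd d) ℂ),
      (∀ (n : Fin (N + 1)) (y : Rd d),
        Ψ n y = (((y ⟨0, hd⟩ : ℝ) ^ (n : ℕ) : ℝ) : ℂ) * φ y) →
      F φ = ∑ n, g n (Ψ n))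
    (hBD : BoundedDensity (tdSupport F)) :
    BoundedDensity (⋃ n, tdSupport (g n)) := by
  obtain ⟨hfin, K, hK⟩ := hBD
  have h1 : ∀ x : Rd d, ((⋃ n, tdSupport (g n)) ∩ Metric.ball x 1).encard ≤ K := by
    intro x
    by_contra! hlt
    have hle : ((K + 1 : ℕ) : ℕ∞) ≤ ((⋃ n, tdSupport (g n)) ∩ Metric.ball x 1).encard := by
      push_cast
      exact Order.add_one_le_of_lt hlt
    obtain ⟨t, hts, htc⟩ := Set.exists_subset_encard_eq hle
    have htf : t.Finite := Set.finite_of_encard_eq_coe htc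
    have h2 := aux_count hd N g F hap hsum K hK hfin x htf.toFinset (by simpa using hts)
    rw [htf.encard_eq_coe_toFinset_card] at htc
    have : htf.toFinset.card = K + 1 := by exact_mod_cast htc
    omega
  have h2 := fun x => Set.encard_le_coe_iff_finite_ncard_le.1 (h1 x)
  refine ⟨?_, K, fun x => (h2 x).2⟩
  intro x r
  obtain ⟨t, -, htf, ht⟩ := Metric.totallyBounded_iff.1
    ((isCompact_closedBall x r).totallyBounded.subset Metric.ball_subset_closedBall) 1 one_pos
    |>.imp fun t ht => And.intro trivial ht
  refine (htf.biUnion fun y _ => (h2 y).1).subset ?_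
  rintro z ⟨hz1, hz2⟩
  obtain ⟨y, hy, hzy⟩ := Set.mem_iUnion₂.1 (ht hz2)
  exact Set.mem_iUnion₂.2 ⟨y, hy, hz1, hzy⟩
end
end

section
/- There exists a purely point measure μ on ℝ² belonging to S*(ℝ²) such that: (i) supp μ is uniformly discrete; (ii) the Fourier transform μ̂ is a purely point measure with |μ̂|(B(0,r)) = O(r²) as r → ∞; and yet (iii) supp μ is not contained in any finite union of translates of full-rank lattices in ℝ². -/
open MeasureTheory SchwartzMap Metric Set
open scoped Pointwise RealInnerProductSpace ENNReal NNReal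

noncomputable section

section Aux
open scoped FourierTransform

def WW (x : ℝ) : ℝ := (1 + x ^ 2)⁻¹

lemma WW_pos (x : ℝ) : 0 < WW x := by unfold WW; positivity

lemma WW_le_one (x : ℝ) : WW x ≤ 1 := by
  unfold WW; exact inv_le_one_of_one_le₀ (by nlinarith [sq_nonneg x])

lemma WW_integrable : Integrable WW := by
  have := integrable_inv_one_add_sq; exact this

lemma WW_shift (s x : ℝ) : WW (s + x) ≤ 2 * (1 + s ^ 2) * WW x := by
  unfold WW
  rw [← div_eq_mul_inv, inv_eq_one_div, div_le_div_iff₀ (by positivity) (by positivity)]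
  nlinarith [sq_nonneg (2 * s + x), sq_nonneg (s * (s+x)), sq_nonneg s]

lemma WW_summable : Summable (fun n : ℤ => WW n) := by
  have h : Summable (fun n : ℤ => 1 / |(n:ℝ)| ^ (2:ℝ)) := by
    have := Real.summable_one_div_int_pow (p := 2) |>.2 (by norm_num)
    refine this.congr fun n => ?_
    norm_num
  have h2 := Real.summable_one_div_int_pow (p := 2) |>.2 (by norm_num)
  refine Summable.of_norm_bounded_eventually h2 ?_
  have : ∀ᶠ n : ℤ in Filter.cofinite, n ≠ 0 := (Set.finite_singleton (0:ℤ)).compl_mem_cofinite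
  filter_upwards [this] with n hn
  rw [Real.norm_of_nonneg (WW_pos _).le]
  have : (0:ℝ) < (n:ℝ)^2 := by positivity
  unfold WW
  rw [one_div]
  gcongr
  linarith

lemma WW_shift_summable (s : ℝ) : Summable (fun n : ℤ => WW (s + n)) :=
  Summable.of_nonneg_of_le (fun n => (WW_pos _).le) (fun n => WW_shift s n)
    (WW_summable.mul_left _)

lemma bigO_of_WW {f : ℝ → ℂ} {C : ℝ} (h : ∀ x, ‖f x‖ ≤ C * WW x) :
    f =O[Filter.cocompact ℝ] (|·| ^ (-(2:ℝ))) := by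
  refine Asymptotics.IsBigO.of_bound |C| ?_
  have : ∀ᶠ x : ℝ in Filter.cocompact ℝ, x ≠ 0 := by
    have := (isCompact_singleton (x := (0:ℝ))).compl_mem_cocompact
    filter_upwards [this] with x hx using hx
  filter_upwards [this] with x hx
  refine (h x).trans ?_
  have h1 : ‖|x| ^ (-(2:ℝ))‖ = (x ^ 2)⁻¹ := by
    rw [Real.rpow_neg (abs_nonneg _)]
    norm_num
  rw [h1]
  have : (0:ℝ) < x ^ 2 := by positivity
  have h3 : WW x ≤ (x^2)⁻¹ := by unfold WW; gcongr; linarith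
  calc C * WW x ≤ |C| * WW x := mul_le_mul_of_nonneg_right (le_abs_self _) (WW_pos _).le
    _ ≤ _ := by gcongr

lemma P1 {f : ℝ → ℂ} (hc : Continuous f) {C D : ℝ} (h : ∀ x, ‖f x‖ ≤ C * WW x)
    (h' : ∀ x, ‖𝓕 f x‖ ≤ D * WW x) (s : ℝ) :
    ∑' n : ℤ, f (s + n) = ∑' n : ℤ, 𝓕 f n * Complex.exp (2 * Real.pi * Complex.I * n * s) := by
  rw [Real.tsum_eq_tsum_fourier_of_rpow_decay hc (b := 2) (by norm_num) (bigO_of_WW h)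
    (bigO_of_WW h') s]
  refine tsum_congr fun n => ?_
  rw [fourier_coe_apply]
  simp

lemma P2 {f F : ℝ → ℝ → ℂ} (hc : Continuous (Function.uncurry f)) {C D : ℝ}
    (h : ∀ x y, ‖f x y‖ ≤ C * (WW x * WW y))
    (h' : ∀ x y, ‖F x y‖ ≤ D * (WW x * WW y))
    (hF : ∀ u v, 𝓕 (fun x => 𝓕 (f x) v) u = F u v) (s t : ℝ) :
    ∑' n : ℤ, ∑' m : ℤ, f (s + m) (t + n) =
    ∑' l : ℤ, ∑' k : ℤ, F k l * Complex.exp (2 * Real.pi * Complex.I * k * s)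
      * Complex.exp (2 * Real.pi * Complex.I * l * t) := by
  have hC : 0 ≤ C := by
    have := (norm_nonneg _).trans (h 0 0)
    simpa [WW] using this
  have hD : 0 ≤ D := by
    have := (norm_nonneg _).trans (h' 0 0)
    simpa [WW] using this
  have hcx : ∀ x, Continuous (f x) := fun x => by
    have : f x = Function.uncurry f ∘ (fun y => (x, y)) := rfl
    rw [this]; fun_prop
  have hcy : ∀ y, Continuous (fun x => f x y) := fun y => by
    have : (fun x => f x y) = Function.uncurry f ∘ (fun x => (x, y)) := rfl
    rw [this]; fun_prop
  have hint : ∀ x, Integrable (f x) := fun x =>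
    Integrable.mono' (WW_integrable.const_mul (C * WW x)) (hcx x).aestronglyMeasurable
      (Filter.Eventually.of_forall fun y => by rw [mul_assoc]; exact h x y)
  have hI : (0:ℝ) ≤ ∫ y, WW y := integral_nonneg fun y => (WW_pos y).le
  -- partial transform
  have hGb' : ∀ v x, ∫ y, ‖𝐞 (-(y * v)) • f x y‖ ≤ (C * ∫ y, WW y) * WW x := by
    intro v x
    have : ∫ y, ‖𝐞 (-(y * v)) • f x y‖ ≤ ∫ y, (C * WW x) * WW y := by
      refine integral_mono_of_nonneg (Filter.Eventually.of_forall fun y => norm_nonneg _)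
        (WW_integrable.const_mul _) (Filter.Eventually.of_forall fun y => ?_)
      simp only [Circle.norm_smul]
      rw [mul_assoc]; exact h x y
    refine this.trans (le_of_eq ?_)
    rw [integral_const_mul]; ring
  have hGb : ∀ v x, ‖𝓕 (f x) v‖ ≤ (C * ∫ y, WW y) * WW x := by
    intro v x
    rw [Real.fourier_real_eq]
    exact (norm_integral_le_integral_norm _).trans (hGb' v x)
  have hint' : ∀ (v : ℝ) (m : ℤ), Integrable (fun y => 𝐞 (-(y * v)) • f (s + m) y) := by
    intro v m
    refine Integrable.mono' (WW_integrable.const_mul (C * WW (s + m))) ?_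
      (Filter.Eventually.of_forall fun y => by
        rw [Circle.norm_smul, mul_assoc]; exact h (s + m) y)
    refine Continuous.aestronglyMeasurable ?_
    have := hcx (s + m)
    fun_prop
  have hGc : ∀ v, Continuous (fun x => 𝓕 (f x) v) := by
    intro v
    simp only [Real.fourier_real_eq]
    refine continuous_of_dominated (bound := fun y => C * WW y) (fun x => ?_) (fun x => ?_)
      (WW_integrable.const_mul _) ?_
    · refine Continuous.aestronglyMeasurable ?_
      have := hcx x
      fun_prop
    · refine Filter.Eventually.of_forall fun y => ?_
      rw [Circle.norm_smul]
      refine (h x y).trans ?_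
      gcongr
      have := WW_le_one x
      have := WW_pos y
      nlinarith
    · refine Filter.Eventually.of_forall fun y => ?_
      have := hcy y
      fun_prop
  have hP : ∀ v, ∑' m : ℤ, 𝓕 (f (s + m)) v =
      ∑' k : ℤ, F k v * Complex.exp (2 * Real.pi * Complex.I * k * s) := by
    intro v
    have := P1 (hGc v) (hGb v) (D := D) (fun u => by
      rw [hF]
      refine (h' u v).trans ?_
      gcongr
      have := WW_le_one v
      have := WW_pos u
      nlinarith) s
    rw [this]
    simp only [hF]
  have hexp : ∀ (k : ℤ) (s : ℝ), ‖Complex.exp (2 * Real.pi * Complex.I * k * s)‖ = 1 := by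
    intro k s
    have : (2 * Real.pi * Complex.I * k * s : ℂ) = ((2 * Real.pi * k * s : ℝ) : ℂ) * Complex.I := by
      push_cast; ring
    rw [this, Complex.norm_exp_ofReal_mul_I]
  have hsm : ∀ y, Summable (fun m : ℤ => f (s + m) y) := fun y =>
    Summable.of_norm_bounded (((WW_shift_summable s).mul_right (WW y)).mul_left C)
      (fun m => h _ _)
  set hh : ℝ → ℂ := fun y => ∑' m : ℤ, f (s + m) y with hhdef
  have hhc : Continuous hh := by
    refine continuous_tsum (fun m => hcx _) ((WW_shift_summable s).mul_left C) fun m y => ?_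
    refine (h _ _).trans ?_
    gcongr
    have := WW_le_one y
    have := WW_pos (s + m)
    nlinarith
  have hhb : ∀ y, ‖hh y‖ ≤ (C * ∑' m : ℤ, WW (s + m)) * WW y := by
    intro y
    refine (tsum_of_norm_bounded ((((WW_shift_summable s).mul_right (WW y)).mul_left C).hasSum)
      (fun m => h _ _)).trans (le_of_eq ?_)
    rw [tsum_mul_left, tsum_mul_right, mul_assoc]
  have hhF : ∀ v, 𝓕 hh v = ∑' m : ℤ, 𝓕 (f (s + m)) v := by
    intro v
    simp only [Real.fourier_real_eq, hhdef]
    rw [integral_tsum_of_summable_integral_norm]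
    · congr 1
      ext y
      simp only [Circle.smul_def]
      rw [← tsum_const_smul'']
    · intro m
      exact hint' v m
    · refine Summable.of_nonneg_of_le (fun m => integral_nonneg fun y => norm_nonneg _) (fun m => ?_)
        ((WW_shift_summable s).mul_left (C * ∫ y, WW y))
      exact hGb' v (s + m)
  have hhFb : ∀ v, ‖𝓕 hh v‖ ≤ (D * ∑' k : ℤ, WW k) * WW v := by
    intro v
    rw [hhF, hP]
    refine (tsum_of_norm_bounded (((WW_summable.mul_right (WW v)).mul_left D).hasSum)
      (fun m => ?_)).trans (le_of_eq ?_)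
    · rw [norm_mul, hexp, mul_one]
      exact h' _ _
    · rw [tsum_mul_left, tsum_mul_right, mul_assoc]
  rw [P1 hhc hhb hhFb t]
  refine tsum_congr fun l => ?_
  rw [hhF, hP, tsum_mul_right]

def sem (φ : 𝓢(Rd 2, ℂ)) : ℝ :=
  (Finset.Iic ((4, 0) : ℕ × ℕ)).sup (schwartzSeminormFamily ℂ (Rd 2) ℂ) φ

lemma sem_nonneg (φ : 𝓢(Rd 2, ℂ)) : 0 ≤ sem φ := apply_nonneg _ _

lemma schwartz_decay (φ : 𝓢(Rd 2, ℂ)) (z : Rd 2) :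
    ‖φ z‖ ≤ (16 * sem φ) * (WW (z 0) * WW (z 1)) := by
  have h := SchwartzMap.one_add_le_sup_seminorm_apply (𝕜 := ℂ) (m := (4, 0)) (k := 4) (n := 0)
    le_rfl le_rfl φ z
  rw [norm_iteratedFDeriv_zero] at h
  have h0 : |z 0| ≤ ‖z‖ := PiLp.norm_apply_le z 0
  have h1 : |z 1| ≤ ‖z‖ := PiLp.norm_apply_le z 1
  have hb : ∀ x : ℝ, |x| ≤ ‖z‖ → 1 + x ^ 2 ≤ (1 + ‖z‖) ^ 2 := by
    intro x hx
    rw [← sq_abs]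
    nlinarith [abs_nonneg x, norm_nonneg z]
  have h4 : (1 + z 0 ^ 2) * (1 + z 1 ^ 2) ≤ (1 + ‖z‖) ^ 4 := by
    calc _ ≤ (1 + ‖z‖) ^ 2 * (1 + ‖z‖) ^ 2 := by
          gcongr
          · exact hb _ h0
          · exact hb _ h1
      _ = _ := by ring
  have h5 : (1 + z 0 ^ 2) * (1 + z 1 ^ 2) * ‖φ z‖ ≤ 16 * sem φ := by
    calc _ ≤ (1 + ‖z‖) ^ 4 * ‖φ z‖ := by gcongr
      _ ≤ _ := h
      _ = _ := by norm_num [sem]; rfl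
  unfold WW
  rw [← mul_inv, ← div_eq_mul_inv, le_div_iff₀ (by positivity), mul_comm]
  exact h5

lemma WW_scale {c : ℝ} (hc : c ≠ 0) (y : ℝ) : WW (c * y) ≤ (1 + (c ^ 2)⁻¹) * WW y := by
  unfold WW
  rw [← div_eq_mul_inv, inv_eq_one_div, div_le_div_iff₀ (by positivity) (by positivity)]
  have : (c^2)⁻¹ * (c * y)^2 = y ^ 2 := by field_simp
  have h2 : 0 < (c^2)⁻¹ := by positivity
  nlinarith [sq_nonneg (c * y)]

lemma WW_neg (x : ℝ) : WW (-x) = WW x := by simp [WW]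

lemma integral_Rd2 (g : Rd 2 → ℂ) (hg : Integrable g) :
    ∫ z, g z = ∫ x : ℝ, ∫ y : ℝ, g !₂[x, y] := by
  have e1 := (PiLp.volume_preserving_toLp (Fin 2))
  have e2 := (volume_preserving_finTwoArrow ℝ).symm
  have hm := e1.comp e2
  have hme : MeasurableEmbedding ((WithLp.toLp 2 : (Fin 2 → ℝ) → Rd 2) ∘
      (MeasurableEquiv.finTwoArrow (α := ℝ)).symm) :=
    (MeasurableEquiv.toLp 2 (Fin 2 → ℝ)).measurableEmbedding.comp
      (MeasurableEquiv.finTwoArrow (α := ℝ)).symm.measurableEmbedding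
  rw [← hm.integral_comp hme]
  have hi := (hm.integrable_comp_emb hme (g := g)).2 hg
  rw [Measure.volume_eq_prod] at hi ⊢
  exact integral_prod _ hi

lemma P3 (φ : 𝓢(Rd 2, ℂ)) {M : ℝ} (hM : 0 < M) (s t : ℝ) :
    ∑' n : ℤ, ∑' m : ℤ, (𝓕 φ : 𝓢(Rd 2, ℂ)) !₂[s + m, M * (t + n)] =
    ∑' l : ℤ, ∑' k : ℤ, ((M : ℂ)⁻¹ * φ !₂[-(k : ℝ), -((l : ℝ) / M)]) *
      Complex.exp (2 * Real.pi * Complex.I * k * s)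
      * Complex.exp (2 * Real.pi * Complex.I * l * t) := by
  set g : 𝓢(Rd 2, ℂ) := 𝓕 φ with hg
  have hM0 : M ≠ 0 := hM.ne'
  have hcont : Continuous (fun p : ℝ × ℝ => (!₂[p.1, M * p.2] : Rd 2)) := by
    refine (PiLp.continuous_toLp 2 _).comp ?_
    refine continuous_pi fun i => ?_
    fin_cases i <;> simp <;> fun_prop
  refine P2 (f := fun x y => g !₂[x, M * y])
    (F := fun u v => (M : ℂ)⁻¹ * φ !₂[-u, -(v / M)])
    (C := 16 * sem g * (1 + (M ^ 2)⁻¹)) (D := M⁻¹ * (16 * sem φ) * (1 + ((M⁻¹) ^ 2)⁻¹))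
    ?_ ?_ ?_ ?_ s t
  · exact g.continuous.comp hcont
  · intro x y
    refine (schwartz_decay g _).trans ?_
    have h1 := WW_scale hM0 y
    have h2 := sem_nonneg g
    have h3 := WW_pos x
    simp only [Matrix.cons_val_zero, Matrix.cons_val_one]
    calc _ ≤ 16 * sem g * (WW x * ((1 + (M ^ 2)⁻¹) * WW y)) := by gcongr
      _ = _ := by ring
  · intro u v
    rw [norm_mul]
    have h0 := (schwartz_decay φ !₂[-u, -(v / M)])
    have h1 := WW_scale (inv_ne_zero hM0) v
    have h2 := sem_nonneg φ
    have h3 := WW_pos u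
    simp only [Matrix.cons_val_zero, Matrix.cons_val_one, WW_neg] at h0
    have hn : ‖(M : ℂ)⁻¹‖ = M⁻¹ := by simp [abs_of_pos hM]
    rw [hn]
    rw [inv_mul_eq_div] at h1
    calc _ ≤ M⁻¹ * (16 * sem φ * (WW u * WW (v / M))) := by gcongr
      _ ≤ M⁻¹ * (16 * sem φ * (WW u * ((1 + ((M⁻¹) ^ 2)⁻¹) * WW v))) := by gcongr
      _ = _ := by ring
  · intro u v
    have hinv : (𝓕 g : 𝓢(Rd 2, ℂ)) !₂[u, v / M] = φ !₂[-u, -(v / M)] := by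
      have h1 : (𝓕⁻ g : 𝓢(Rd 2, ℂ)) = φ := by rw [hg]; simp
      have h2 : (𝓕⁻ g : 𝓢(Rd 2, ℂ)) !₂[-u, -(v / M)] = (𝓕 g : 𝓢(Rd 2, ℂ)) !₂[u, v / M] := by
        rw [fourierInv_coe, fourier_coe, Real.fourierInv_eq_fourier_neg]
        have : (-!₂[-u, -(v / M)] : Rd 2) = !₂[u, v / M] := by
          ext i
          fin_cases i <;> simp
        rw [this]
        rfl
      rw [← h2, h1]
    have hE : (𝓕 g : 𝓢(Rd 2, ℂ)) !₂[u, v / M] = ∫ z, 𝐞 (-⟪z, (!₂[u, v / M] : Rd 2)⟫) • g z := rfl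
    rw [← hinv, hE, integral_Rd2]
    · simp only [Real.fourier_real_eq]
      rw [← integral_const_mul]
      congr 1
      ext x
      have hy : ∫ y, 𝐞 (-(y * v)) • g !₂[x, M * y] =
          (M:ℂ)⁻¹ * ∫ y, 𝐞 (-(y * (v / M))) • g !₂[x, y] := by
        have := Measure.integral_comp_mul_left (fun y => 𝐞 (-(y * (v / M))) • g !₂[x, y]) M
        rw [abs_of_pos (inv_pos.2 hM)] at this
        rw [← Complex.ofReal_inv, ← Complex.real_smul, ← this]
        congr 1
        ext y
        congr 3
        field_simp
      rw [hy]
      simp only [Circle.smul_def, smul_eq_mul]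
      rw [← integral_const_mul, ← integral_const_mul, ← integral_const_mul]
      congr 1
      ext y
      have : 𝐞 (-⟪(!₂[x, y] : Rd 2), !₂[u, v / M]⟫) = 𝐞 (-(x * u)) * 𝐞 (-(y * (v / M))) := by
        rw [← AddChar.map_add_eq_mul]
        congr 1
        simp [PiLp.inner_apply, Fin.sum_univ_two]
        ring
      rw [this, Circle.coe_mul]
      ring
    · have hi : Integrable (g : Rd 2 → ℂ) := g.integrable
      refine hi.mono ?_ (Filter.Eventually.of_forall fun z => by rw [Circle.norm_smul])
      refine Continuous.aestronglyMeasurable ?_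
      have := g.continuous
      fun_prop

variable {ι : Type}

def pushMass (w : ι → ℂ) (q : ι → Rd 2) (γ : Rd 2) : ℂ := ∑' i : {i // q i = γ}, w i

def WSum (w : ι → ℂ) (q : ι → Rd 2) : Prop :=
  Summable fun i => ‖w i‖ * (WW (q i 0) * WW (q i 1))

lemma WSum.norm_summable {w : ι → ℂ} {q : ι → Rd 2} (h : WSum w q) (φ : 𝓢(Rd 2, ℂ)) :
    Summable fun i => ‖w i‖ * ‖φ (q i)‖ := by
  refine Summable.of_nonneg_of_le (fun i => by positivity) (fun i => ?_)
    (h.mul_left (16 * sem φ))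
  have := schwartz_decay φ (q i)
  calc _ ≤ ‖w i‖ * ((16 * sem φ) * (WW (q i 0) * WW (q i 1))) := by gcongr
    _ = _ := by ring

lemma WSum.summable {w : ι → ℂ} {q : ι → Rd 2} (h : WSum w q) (φ : 𝓢(Rd 2, ℂ)) :
    Summable fun i => w i * φ (q i) := by
  refine Summable.of_norm ?_
  simpa only [norm_mul] using h.norm_summable φ

def pushD (w : ι → ℂ) (q : ι → Rd 2) (h : WSum w q) : TemperedDist 2 :=
  SchwartzMap.mkCLMtoNormedSpace (fun φ => ∑' i, w i * φ (q i))
    (by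
      intro φ ψ
      rw [← (h.summable φ).tsum_add (h.summable ψ)]
      exact tsum_congr fun i => by simp [mul_add])
    (by
      intro c φ
      rw [smul_eq_mul, ← tsum_mul_left]
      exact tsum_congr fun i => by simp; ring)
    (by
      refine ⟨Finset.Iic (4, 0), 16 * ∑' i, ‖w i‖ * (WW (q i 0) * WW (q i 1)), ?_, fun φ => ?_⟩
      · have : 0 ≤ ∑' i, ‖w i‖ * (WW (q i 0) * WW (q i 1)) :=
          tsum_nonneg fun i => mul_nonneg (norm_nonneg _) (mul_pos (WW_pos _) (WW_pos _)).le
        positivity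
      · refine (tsum_of_norm_bounded (h.mul_left (16 * sem φ)).hasSum (fun i => ?_)).trans
          (le_of_eq ?_)
        · have := schwartz_decay φ (q i)
          rw [norm_mul]
          calc _ ≤ ‖w i‖ * ((16 * sem φ) * (WW (q i 0) * WW (q i 1))) := by gcongr
            _ = _ := by ring
        · rw [tsum_mul_left, sem]; ring)

lemma pushD_apply (w : ι → ℂ) (q : ι → Rd 2) (h : WSum w q) (φ : 𝓢(Rd 2, ℂ)) :
    pushD w q h φ = ∑' i, w i * φ (q i) := rfl

lemma WSum.fiber {w : ι → ℂ} {q : ι → Rd 2} (h : WSum w q) (γ : Rd 2) :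
    Summable fun i : {i // q i = γ} => ‖w i‖ := by
  have h1 := (Summable.subtype h {i | q i = γ}).mul_right (WW (γ 0) * WW (γ 1))⁻¹
  refine h1.congr fun i => ?_
  have h2 : q i.1 = γ := i.2
  have := WW_pos (γ 0)
  have := WW_pos (γ 1)
  simp only [Function.comp, h2]
  field_simp

lemma pushRep [Countable ι] (w : ι → ℂ) (q : ι → Rd 2) (h : WSum w q) (f : TemperedDist 2)
    (hf : ∀ φ, f φ = ∑' i, w i * φ (q i)) :
    RepMeasure (pushMass w q) f := by
  refine ⟨?_, fun φ => ?_, fun φ => ?_⟩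
  · refine (Set.countable_range q).mono fun γ hγ => ?_
    by_contra hn
    apply hγ
    have : IsEmpty {i // q i = γ} := ⟨fun i => hn ⟨i.1, i.2⟩⟩
    exact tsum_empty
  · have h1 := ((Equiv.sigmaFiberEquiv q).summable_iff.2 (h.norm_summable φ)).sigma
    refine Summable.of_nonneg_of_le (fun _ => by positivity) (fun γ => ?_) h1
    have h2 : ∀ i : {i // q i = γ}, ‖w i‖ * ‖φ (q i)‖ = ‖w i‖ * ‖φ γ‖ := fun i => by rw [i.2]
    have h3 : ‖pushMass w q γ‖ ≤ ∑' i : {i // q i = γ}, ‖w i‖ := norm_tsum_le_tsum_norm (h.fiber γ)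
    calc _ ≤ (∑' i : {i // q i = γ}, ‖w i‖) * ‖φ γ‖ := by gcongr
      _ = ∑' i : {i // q i = γ}, ‖w i‖ * ‖φ γ‖ := by rw [tsum_mul_right]
      _ = _ := tsum_congr fun i => (h2 i).symm
  · have hts := ((Equiv.sigmaFiberEquiv q).summable_iff.2 (h.summable φ)).tsum_sigma
    simp only [Function.comp_apply] at hts
    rw [hf, ← (Equiv.sigmaFiberEquiv q).tsum_eq, hts]
    refine tsum_congr fun γ => ?_
    rw [pushMass, ← tsum_mul_right]
    refine tsum_congr fun i => ?_
    simp only [Equiv.sigmaFiberEquiv_apply]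
    rw [i.2]

lemma push_ballVar (w : ι → ℂ) (q : ι → Rd 2) (h : WSum w q) (r : ℝ) :
    ballVar (pushMass w q) r ≤ ∑' i, if ‖q i‖ < r then (‖w i‖₊ : ℝ≥0∞) else 0 := by
  rw [← (Equiv.sigmaFiberEquiv q).tsum_eq, ENNReal.tsum_sigma']
  refine ENNReal.tsum_le_tsum fun γ => ?_
  have h2 : ∀ i : {i // q i = γ}, (if ‖q i‖ < r then (‖w i‖₊ : ℝ≥0∞) else 0)
     = if ‖γ‖ < r then (‖w i‖₊ : ℝ≥0∞) else 0 := fun i => by rw [i.2]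
  simp only [Equiv.sigmaFiberEquiv_apply, h2]
  split_ifs
  · have hs : Summable fun i : {i // q i = γ} => ‖w i‖₊ := by
      rw [← NNReal.summable_coe]; exact h.fiber γ
    rw [← ENNReal.coe_tsum hs]
    exact ENNReal.coe_le_coe.2 (nnnorm_tsum_le hs)
  · simp

lemma pushMass_inj (w : ι → ℂ) (q : ι → Rd 2) (hq : Function.Injective q) (i : ι) :
    pushMass w q (q i) = w i := by
  have : Unique {j // q j = q i} := ⟨⟨⟨i, rfl⟩⟩, fun j => Subtype.ext (hq j.2)⟩
  rw [pushMass, tsum_eq_single ⟨i, rfl⟩]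
  intro j hj
  exact absurd (Subsingleton.elim _ _) hj

lemma pushMass_support (w : ι → ℂ) (q : ι → Rd 2) (hq : Function.Injective q)
    (hw : ∀ i, w i ≠ 0) : {x | pushMass w q x ≠ 0} = Set.range q := by
  ext γ
  constructor
  · intro hγ
    by_contra hn
    apply hγ
    have : IsEmpty {i // q i = γ} := ⟨fun i => hn ⟨i.1, i.2⟩⟩
    exact tsum_empty
  · rintro ⟨i, rfl⟩
    show pushMass w q (q i) ≠ 0
    rw [pushMass_inj w q hq]
    exact hw i

lemma exists_indep : ∃ s : ℕ → ℝ, LinearIndependent ℚ s := by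
  let B := Module.Basis.ofVectorSpace ℚ ℝ
  have hinf : Infinite (Module.Basis.ofVectorSpaceIndex ℚ ℝ) := by
    rw [Cardinal.infinite_iff, B.mk_eq_rank'', Real.rank_rat_real]
    exact Cardinal.aleph0_le_continuum
  exact ⟨fun n => B (Infinite.natEmbedding _ n),
    B.linearIndependent.comp _ (Infinite.natEmbedding _).injective⟩

def MM (j : ℕ) : ℝ := 2 ^ (j + 1)

lemma MM_pos (j : ℕ) : 0 < MM j := by unfold MM; positivity
lemma MM_ge (j : ℕ) : 1 ≤ MM j := one_le_pow₀ (by norm_num)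

def cc (s : ℕ → ℝ) (j : ℕ) : ℝ := (1 / 2) ^ j * (MM j ^ 2)⁻¹ * (1 + s j ^ 2)⁻¹

lemma cc_pos (s : ℕ → ℝ) (j : ℕ) : 0 < cc s j := by
  have := MM_pos j
  unfold cc; positivity

lemma cc_le1 (s : ℕ → ℝ) (j : ℕ) : cc s j * (1 + s j ^ 2) ≤ (1 / 2) ^ j := by
  have h1 := MM_pos j
  have h2 : (MM j ^ 2)⁻¹ ≤ 1 := inv_le_one_of_one_le₀ (one_le_pow₀ (MM_ge j))
  have : cc s j * (1 + s j ^ 2) = (1 / 2) ^ j * (MM j ^ 2)⁻¹ := by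
    unfold cc
    have : (1 + s j ^ 2) ≠ 0 := by positivity
    field_simp
  rw [this]
  exact mul_le_of_le_one_right (by positivity) h2

lemma cc_le2 (s : ℕ → ℝ) (j : ℕ) : cc s j * (MM j ^ 2) ≤ (1 / 2) ^ j := by
  have h1 := MM_pos j
  have h2 : (1 + s j ^ 2)⁻¹ ≤ 1 := inv_le_one_of_one_le₀ (by nlinarith [sq_nonneg (s j)])
  have : cc s j * (MM j ^ 2) = (1 / 2) ^ j * (1 + s j ^ 2)⁻¹ := by
    unfold cc
    field_simp
  rw [this]
  exact mul_le_of_le_one_right (by positivity) h2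

lemma cc_le3 (s : ℕ → ℝ) (j : ℕ) : cc s j ≤ (1 / 2) ^ j := by
  refine le_trans ?_ (cc_le1 s j)
  exact le_mul_of_one_le_right (cc_pos s j).le (by nlinarith [sq_nonneg (s j)])

abbrev II : Type := ℕ × ℤ × ℤ

def pp (s : ℕ → ℝ) (i : II) : Rd 2 := !₂[s i.1 + i.2.2, MM i.1 * (1 / 2 + i.2.1)]
def qq (i : II) : Rd 2 := !₂[-(i.2.2 : ℝ), -((i.2.1 : ℝ) / MM i.1)]
def w1 (s : ℕ → ℝ) (i : II) : ℂ := (cc s i.1 : ℂ)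
def w2 (s : ℕ → ℝ) (i : II) : ℂ := (cc s i.1 : ℂ) * ((MM i.1 : ℂ)⁻¹ *
  Complex.exp (2 * Real.pi * Complex.I * i.2.2 * s i.1)
  * Complex.exp (2 * Real.pi * Complex.I * i.2.1 * (1 / 2 : ℝ)))

lemma norm_w1 (s : ℕ → ℝ) (i : II) : ‖w1 s i‖ = cc s i.1 := by
  simp [w1, abs_of_pos (cc_pos s i.1)]

lemma hexp1 (k : ℤ) (s : ℝ) : ‖Complex.exp (2 * Real.pi * Complex.I * k * s)‖ = 1 := by
  have : (2 * Real.pi * Complex.I * k * s : ℂ) = ((2 * Real.pi * k * s : ℝ) : ℂ) * Complex.I := by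
    push_cast; ring
  rw [this, Complex.norm_exp_ofReal_mul_I]

lemma norm_w2 (s : ℕ → ℝ) (i : II) : ‖w2 s i‖ = cc s i.1 * (MM i.1)⁻¹ := by
  unfold w2
  rw [norm_mul, norm_mul, norm_mul, hexp1, hexp1]
  simp [abs_of_pos (cc_pos s i.1), abs_of_pos (MM_pos i.1)]

lemma base_summable : Summable (fun i : II => (1 / 2 : ℝ) ^ i.1 * (WW i.2.1 * WW i.2.2)) := by
  have h1 : Summable (fun j : ℕ => (1 / 2 : ℝ) ^ j) := summable_geometric_two
  have h2 := WW_summable.mul_of_nonneg WW_summable (fun n => (WW_pos _).le) (fun n => (WW_pos _).le)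
  exact h1.mul_of_nonneg h2 (fun n => by positivity)
    (fun n => mul_nonneg (WW_pos _).le (WW_pos _).le)

lemma wsum1 (s : ℕ → ℝ) : WSum (w1 s) (pp s) := by
  refine Summable.of_nonneg_of_le
    (fun i => mul_nonneg (norm_nonneg _) (mul_pos (WW_pos _) (WW_pos _)).le) (fun i => ?_)
    (base_summable.mul_left 10)
  obtain ⟨j, n, m⟩ := i
  simp only [norm_w1, pp, Matrix.cons_val_zero, Matrix.cons_val_one]
  have hM := MM_pos j
  have h2 : (MM j ^ 2)⁻¹ ≤ 1 := inv_le_one_of_one_le₀ (one_le_pow₀ (MM_ge j))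
  have a1 := WW_shift (s j) m
  have a2 : WW (MM j * (1 / 2 + n)) ≤ 5 * WW n := by
    have b1 := WW_scale hM.ne' (1 / 2 + n)
    have b2 := WW_shift (1 / 2) n
    have b3 := WW_pos n
    have b4 := WW_pos (1/2+n)
    nlinarith
  have a3 := cc_le1 s j
  have a4 := WW_pos n
  have a5 := WW_pos m
  have a6 := (cc_pos s j).le
  have a7 := WW_pos (MM j * (1 / 2 + n))
  calc _ ≤ cc s j * ((2 * (1 + s j ^ 2) * WW m) * (5 * WW n)) := by gcongr
    _ = (cc s j * (1 + s j ^ 2)) * (10 * (WW n * WW m)) := by ring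
    _ ≤ (1 / 2) ^ j * (10 * (WW n * WW m)) := by gcongr
    _ = _ := by ring

lemma wsum2 (s : ℕ → ℝ) : WSum (w2 s) qq := by
  refine Summable.of_nonneg_of_le
    (fun i => mul_nonneg (norm_nonneg _) (mul_pos (WW_pos _) (WW_pos _)).le) (fun i => ?_)
    (base_summable.mul_left 2)
  obtain ⟨j, l, k⟩ := i
  simp only [norm_w2, qq, Matrix.cons_val_zero, Matrix.cons_val_one, WW_neg]
  have hM := MM_pos j
  have h1 := MM_ge j
  have h2 : (MM j)⁻¹ ≤ 1 := inv_le_one_of_one_le₀ (MM_ge j)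
  have a2 : WW (l / MM j) ≤ 2 * MM j ^ 2 * WW l := by
    have b1 := WW_scale (inv_ne_zero hM.ne') l
    rw [inv_mul_eq_div, inv_pow, inv_inv] at b1
    refine b1.trans ?_
    have := WW_pos l
    gcongr
    nlinarith
  have a3 := cc_le2 s j
  have a4 := WW_pos l
  have a5 := WW_pos k
  have a6 := (cc_pos s j).le
  have a7 := WW_pos (l / MM j)
  calc _ ≤ (cc s j * 1) * (WW k * (2 * MM j ^ 2 * WW l)) := by gcongr
    _ = (cc s j * MM j ^ 2) * (2 * (WW l * WW k)) := by ring
    _ ≤ (1 / 2) ^ j * (2 * (WW l * WW k)) := by gcongr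
    _ = _ := by ring

lemma tsum_II {f : II → ℂ} (hf : Summable f) :
    ∑' i, f i = ∑' j : ℕ, ∑' l : ℤ, ∑' k : ℤ, f (j, l, k) := by
  rw [hf.tsum_prod]
  refine tsum_congr fun j => ?_
  exact (hf.prod_factor j).tsum_prod

lemma fourier_main (s : ℕ → ℝ) (φ : 𝓢(Rd 2, ℂ)) :
    fourierTD (pushD (w1 s) (pp s) (wsum1 s)) φ = ∑' i, w2 s i * φ (qq i) := by
  have h1 : fourierTD (pushD (w1 s) (pp s) (wsum1 s)) φ =
    ∑' i, w1 s i * (𝓕 φ : 𝓢(Rd 2, ℂ)) (pp s i) := rfl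
  rw [h1, tsum_II ((wsum1 s).summable _), tsum_II ((wsum2 s).summable _)]
  refine tsum_congr fun j => ?_
  have h3 := P3 φ (MM_pos j) (s j) (1 / 2)
  simp only [w1, pp, w2, qq, tsum_mul_left]
  rw [h3]
  simp only [← tsum_mul_left]
  refine tsum_congr fun l => tsum_congr fun k => ?_
  ring

lemma count_le {R : ℝ} (hR : 0 ≤ R) :
    ∑' l : ℤ, (if |(l : ℝ)| < R then (1 : ℝ≥0∞) else 0) ≤ ENNReal.ofReal (2 * R + 1) := by
  rw [tsum_eq_sum (s := Finset.Icc (-⌊R⌋) ⌊R⌋)]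
  · refine (Finset.sum_le_sum (g := fun _ => 1) fun l _ => by split_ifs <;> simp).trans ?_
    rw [Finset.sum_const, nsmul_eq_mul, mul_one, Int.card_Icc]
    have h0 : 0 ≤ ⌊R⌋ := Int.floor_nonneg.2 hR
    have h1 : ((⌊R⌋ + 1 - -⌊R⌋).toNat : ℝ≥0∞) = ENNReal.ofReal ((⌊R⌋ + 1 - -⌊R⌋).toNat : ℝ) := by
      simp
    rw [h1]
    refine ENNReal.ofReal_le_ofReal ?_
    have h2 : ((⌊R⌋ + 1 - -⌊R⌋).toNat : ℝ) = (((⌊R⌋ + 1 - -⌊R⌋).toNat : ℤ) : ℝ) :=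
      (Int.cast_natCast _).symm
    rw [h2, Int.toNat_of_nonneg (by linarith)]
    push_cast
    have := Int.floor_le R
    linarith
  · intro l hl
    rw [if_neg]
    intro h
    apply hl
    rw [abs_lt] at h
    rw [Finset.mem_Icc]
    have h2 : l ≤ ⌊R⌋ := Int.le_floor.2 h.2.le
    have h3 : -l ≤ ⌊R⌋ := Int.le_floor.2 (by push_cast; linarith)
    omega

lemma ball_main (s : ℕ → ℝ) {r : ℝ} (hr : 1 ≤ r) :
    ballVar (pushMass (w2 s) qq) r ≤ ENNReal.ofReal (18 * r ^ 2) := by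
  refine (push_ballVar _ _ (wsum2 s) r).trans ?_
  have hr0 : 0 ≤ r := by linarith
  calc _ ≤ ∑' i : II, ENNReal.ofReal ((1 / 2) ^ i.1 * (MM i.1)⁻¹) *
        ((if |(i.2.1 : ℝ)| < MM i.1 * r then (1 : ℝ≥0∞) else 0) *
        (if |(i.2.2 : ℝ)| < r then (1 : ℝ≥0∞) else 0)) := by
        refine ENNReal.tsum_le_tsum fun i => ?_
        obtain ⟨j, l, k⟩ := i
        have hM := MM_pos j
        split_ifs with h1 h2 h3 h3
        · simp only [mul_one]
          have hen : (‖w2 s (j, l, k)‖₊ : ℝ≥0∞) = ENNReal.ofReal ‖w2 s (j, l, k)‖ := (ofReal_norm _).symm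
          rw [hen, norm_w2]
          refine ENNReal.ofReal_le_ofReal ?_
          gcongr
          exact cc_le3 s j
        · exfalso
          apply h3
          have := (PiLp.norm_apply_le (qq (j, l, k)) 0).trans_lt h1
          simpa [qq] using this
        · exfalso
          apply h2
          have := (PiLp.norm_apply_le (qq (j, l, k)) 1).trans_lt h1
          simp [qq, abs_of_pos hM] at this
          rwa [div_lt_iff₀ hM, mul_comm] at this
        · exfalso
          apply h2
          have := (PiLp.norm_apply_le (qq (j, l, k)) 1).trans_lt h1
          simp [qq, abs_of_pos hM] at this
          rwa [div_lt_iff₀ hM, mul_comm] at this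
        all_goals exact zero_le
    _ = ∑' j : ℕ, ENNReal.ofReal ((1 / 2) ^ j * (MM j)⁻¹) *
        ((∑' l : ℤ, (if |(l : ℝ)| < MM j * r then (1 : ℝ≥0∞) else 0)) *
        ∑' k : ℤ, (if |(k : ℝ)| < r then (1 : ℝ≥0∞) else 0)) := by
        rw [ENNReal.tsum_prod']
        refine tsum_congr fun j => ?_
        rw [ENNReal.tsum_prod']
        simp only [ENNReal.tsum_mul_left]
        congr 1
        rw [← ENNReal.tsum_mul_right]
        refine tsum_congr fun l => ?_
        by_cases hl : |(l : ℝ)| < MM j * r <;> simp [hl]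
    _ ≤ ∑' j : ℕ, ENNReal.ofReal ((1 / 2) ^ j * (9 * r ^ 2)) := by
        refine ENNReal.tsum_le_tsum fun j => ?_
        have hM := MM_pos j
        have hM1 := MM_ge j
        have := count_le hr0
        have := count_le (mul_nonneg hM.le hr0)
        calc _ ≤ ENNReal.ofReal ((1 / 2) ^ j * (MM j)⁻¹) *
              (ENNReal.ofReal (2 * (MM j * r) + 1) * ENNReal.ofReal (2 * r + 1)) := by gcongr
          _ = ENNReal.ofReal ((1 / 2) ^ j * (MM j)⁻¹ * ((2 * (MM j * r) + 1) * (2 * r + 1))) := by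
            rw [← ENNReal.ofReal_mul (by positivity), ← ENNReal.ofReal_mul (by positivity)]
          _ ≤ _ := by
            refine ENNReal.ofReal_le_ofReal ?_
            rw [mul_assoc]
            refine mul_le_mul_of_nonneg_left ?_ (by positivity)
            rw [inv_mul_le_iff₀ hM]
            have e1 : 2 * (MM j * r) + 1 ≤ 3 * (MM j * r) := by nlinarith
            have e2 : 2 * r + 1 ≤ 3 * r := by linarith
            calc _ ≤ 3 * (MM j * r) * (3 * r) := by gcongr
              _ = _ := by ring
    _ = _ := by
        rw [← ENNReal.ofReal_tsum_of_nonneg (fun j => by positivity)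
          (summable_geometric_two.mul_right _), tsum_mul_right, tsum_geometric_two]
        congr 1
        ring

lemma two_adic {j j' : ℕ} {n n' : ℤ} (h : (2:ℤ) ^ j * (2 * n + 1) = 2 ^ j' * (2 * n' + 1)) :
    j = j' ∧ n = n' := by
  have key : ∀ {j j' : ℕ} {n n' : ℤ}, (2:ℤ) ^ j * (2 * n + 1) = 2 ^ j' * (2 * n' + 1) → ¬ j < j' := by
    intro j j' n n' h hlt
    obtain ⟨d, rfl⟩ := Nat.exists_eq_add_of_lt hlt
    have h2 : (2:ℤ) ^ j * (2 * n + 1) = 2 ^ j * (2 * (2 ^ d * (2 * n' + 1))) := by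
      rw [h]; ring
    have h3 := mul_left_cancel₀ (pow_ne_zero j (two_ne_zero)) h2
    omega
  have hj : j = j' := le_antisymm (not_lt.1 (key h.symm)) (not_lt.1 (key h))
  subst hj
  have h3 := mul_left_cancel₀ (pow_ne_zero j (two_ne_zero)) h
  exact ⟨rfl, by omega⟩

lemma pp_sep (s : ℕ → ℝ) (i i' : II) (h : i ≠ i') : 1 ≤ dist (pp s i) (pp s i') := by
  obtain ⟨j, n, m⟩ := i
  obtain ⟨j', n', m'⟩ := i'
  rw [dist_eq_norm]
  by_cases hy : (2:ℤ) ^ j * (2 * n + 1) = 2 ^ j' * (2 * n' + 1)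
  · obtain ⟨rfl, rfl⟩ := two_adic hy
    have hm : m - m' ≠ 0 := by
      intro h0
      apply h
      rw [sub_eq_zero.1 h0]
    refine le_trans ?_ (PiLp.norm_apply_le _ 0)
    have h1 : (1:ℤ) ≤ |m - m'| := Int.one_le_abs hm
    have h2 : (1:ℝ) ≤ |(m:ℝ) - m'| := by exact_mod_cast h1
    simpa [pp] using h2
  · refine le_trans ?_ (PiLp.norm_apply_le _ 1)
    have h1 : (1:ℤ) ≤ |(2:ℤ) ^ j * (2 * n + 1) - 2 ^ j' * (2 * n' + 1)| :=
      Int.one_le_abs (sub_ne_zero.2 hy)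
    have h2 : (1:ℝ) ≤ |(2:ℝ) ^ j * (2 * n + 1) - 2 ^ j' * (2 * n' + 1)| := by exact_mod_cast h1
    have h3 : (pp s (j, n, m) - pp s (j', n', m')) 1 =
        (2:ℝ) ^ j * (2 * n + 1) - 2 ^ j' * (2 * n' + 1) := by
      simp [pp, MM]; ring
    rw [h3]
    exact h2

lemma pp_inj (s : ℕ → ℝ) : Function.Injective (pp s) := by
  intro i i' h
  by_contra hne
  have := pp_sep s i i' hne
  rw [h, dist_self] at this
  linarith

lemma not_lattice (s : ℕ → ℝ) (hs : LinearIndependent ℚ s) :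
    ¬ ∃ (J : ℕ) (L : Fin J → Set (Rd 2)) (v : Fin J → Rd 2),
          (∀ j, IsFullRankLattice (L j)) ∧
          Set.range (pp s) ⊆ ⋃ j, (fun y => v j + y) '' (L j) := by
  rintro ⟨J, L, v, hL, hsub⟩
  choose T hT hLT using hL
  let g : Fin J × Fin 3 → ℝ := fun a =>
    ![v a.1 0, T a.1 (EuclideanSpace.single 0 1) 0, T a.1 (EuclideanSpace.single 1 1) 0] a.2
  have hfin : Finite ℕ := by
    refine hs.finite_of_le_span_finite _ (Set.range g) ?_
    rintro _ ⟨j, rfl⟩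
    obtain ⟨i, hi⟩ := Set.mem_iUnion.1 (hsub ⟨(j, 0, 0), rfl⟩)
    rw [hLT] at hi
    obtain ⟨_, ⟨z, hz, rfl⟩, hy⟩ := hi
    obtain ⟨n0, h0⟩ := hz 0
    obtain ⟨n1, h1⟩ := hz 1
    have hz2 : z = (n0 : ℝ) • EuclideanSpace.single 0 (1:ℝ) + (n1 : ℝ) • EuclideanSpace.single 1 (1:ℝ) := by
      ext a
      fin_cases a <;> simp [h0, h1]
    have hc := congrArg (fun x : Rd 2 => x 0) hy
    simp only [hz2, map_add, map_smul] at hc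
    have hc2 : s j = g (i, 0) + ((n0 : ℚ) • g (i, 1) + (n1 : ℚ) • g (i, 2)) := by
      simp [pp] at hc
      simp [g, Rat.smul_def, ← hc]
    rw [hc2]
    have hmem : ∀ a, g a ∈ Submodule.span ℚ (Set.range g) := fun a =>
      Submodule.subset_span ⟨a, rfl⟩
    exact Submodule.add_mem _ (hmem _)
      (Submodule.add_mem _ (Submodule.smul_mem _ _ (hmem _)) (Submodule.smul_mem _ _ (hmem _)))
  exact not_finite ℕ


end Aux

/-- (The example after Theorem 9.) There exists a pure point
measure `μ` in `S*(ℝ²)` with uniformly discrete support, whose Fourier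
transform is a pure point measure with `|μ̂|(B(0,r)) = O(r²)`, but whose
support is not contained in any finite union of translates of full-rank
lattices. -/
theorem statement14 :
    ∃ (a : Rd 2 → ℂ) (f : TemperedDist 2) (b : Rd 2 → ℂ),
      RepMeasure a f ∧
      UniformlyDiscrete {x | a x ≠ 0} ∧
      RepMeasure b (fourierTD f) ∧
      (∃ C r₀ : ℝ, ∀ r ≥ r₀, ballVar b r ≤ ENNReal.ofReal (C * r ^ 2)) ∧
      ¬ ∃ (J : ℕ) (L : Fin J → Set (Rd 2)) (v : Fin J → Rd 2),
          (∀ j, IsFullRankLattice (L j)) ∧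
          {x | a x ≠ 0} ⊆ ⋃ j, (fun y => v j + y) '' (L j) := by
  obtain ⟨s, hs⟩ := exists_indep
  have hsupp : {x | pushMass (w1 s) (pp s) x ≠ 0} = Set.range (pp s) :=
    pushMass_support _ _ (pp_inj s) fun i => by
      have := (cc_pos s i.1).ne'
      simpa [w1] using this
  refine ⟨pushMass (w1 s) (pp s), pushD (w1 s) (pp s) (wsum1 s), pushMass (w2 s) qq,
    pushRep _ _ (wsum1 s) _ (fun φ => rfl), ⟨1, one_pos, ?_⟩,
    pushRep _ _ (wsum2 s) _ (fourier_main s), ⟨18, 1, fun r hr => ball_main s hr⟩, ?_⟩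
  · rw [hsupp]
    rintro _ ⟨i, rfl⟩ _ ⟨i', rfl⟩ hne
    exact pp_sep s i i' fun h => hne (by rw [h])
  · rw [hsupp]
    exact not_lattice s hs
end
end
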